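/- Let p = 3k+1 be prime with k ≥ 1 and G = (ℤ/pℤ)^s. Then the maximum size of a sum-free subset of G is k·p^{s-1}. -/

import Mathlib

open Finset Pointwise

def apSet (p : ℕ) (a d : ZMod p) (n : ℕ) : Finset (ZMod p) :=
  (Finset.range n).image (fun i : ℕ => a + (i : ZMod p) * d)

theorem mem_apSet {p : ℕ} {a d x : ZMod p} {n : ℕ} :
    x ∈ apSet p a d n ↔ ∃ i : ℕ, i < n ∧ a + (i : ZMod p) * d = x := by
  simp [apSet]

theorem card_apSet_le {p : ℕ} (a d : ZMod p) (n : ℕ) : (apSet p a d n).card ≤ n := by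
  unfold apSet
  exact Finset.card_image_le.trans (by simp)

def IsApSet (p : ℕ) (d : ZMod p) (B : Finset (ZMod p)) : Prop :=
  ∃ a, B = apSet p a d B.card

theorem cd_add {p : ℕ} [Fact p.Prime] {A B : Finset (ZMod p)} (hA : A.Nonempty) (hB : B.Nonempty)
    {m : ℕ} (h : (A + B).card ≤ m) (hm : m < p) : A.card + B.card ≤ m + 1 := by
  have := ZMod.cauchy_davenport (Fact.out : p.Prime) hA hB
  rcases min_le_iff.1 this with h1 | h1 <;> omega

theorem isApSet_of_chain {p : ℕ} [Fact p.Prime] {d : ZMod p} (hd : d ≠ 0) {B : Finset (ZMod p)}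
    (hB : B.Nonempty) (b : ZMod p) (h : ∀ x ∈ B, x ≠ b → x - d ∈ B) : IsApSet p d B := by
  obtain ⟨b0, hb0, h0⟩ : ∃ b0 ∈ B, ∀ x ∈ B, x ≠ b0 → x - d ∈ B := by
    by_cases hb : b ∈ B
    · exact ⟨b, hb, h⟩
    · obtain ⟨c, hc⟩ := hB
      exact ⟨c, hc, fun x hx _ => h x hx (fun e => hb (e ▸ hx))⟩
  refine ⟨b0, Finset.eq_of_subset_of_card_le ?_ (card_apSet_le _ _ _)⟩
  intro x hx
  set i := ((x - b0) / d).val with hi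
  have hip : i < p := ZMod.val_lt _
  have hxi : b0 + (i : ZMod p) * d = x := by
    rw [hi, ZMod.natCast_val, ZMod.cast_id]; field_simp; ring
  have key : ∀ j : ℕ, j ≤ i → b0 + ((i - j : ℕ) : ZMod p) * d ∈ B := by
    intro j
    induction j with
    | zero => intro _; simpa [hxi] using hx
    | succ j ih =>
      intro hj
      have h1 := ih (by omega)
      have h2 : b0 + ((i - j : ℕ) : ZMod p) * d - d ∈ B := by
        apply h0 _ h1
        intro e
        have : ((i - j : ℕ) : ZMod p) * d = 0 := by simpa using e
        rcases mul_eq_zero.1 this with h3 | h3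
        · rw [ZMod.natCast_eq_zero_iff] at h3
          have := Nat.le_of_dvd (by omega) h3
          omega
        · exact hd h3
      have h3 : i - j = (i - (j+1)) + 1 := by omega
      rw [h3] at h2
      push_cast at h2
      convert h2 using 1
      ring
  have hsub : (Finset.range (i+1)).image (fun j : ℕ => b0 + (j : ZMod p) * d) ⊆ B := by
    intro y hy
    simp only [Finset.mem_image, Finset.mem_range] at hy
    obtain ⟨j, hj, rfl⟩ := hy
    have := key (i - j) (by omega)
    rwa [show i - (i - j) = j by omega] at this
  have hc := Finset.card_le_card hsub
  rw [Finset.card_image_of_injOn, Finset.card_range] at hc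
  · exact mem_apSet.2 ⟨i, by omega, hxi⟩
  · intro u hu v hv huv
    simp only [Finset.coe_range, Set.mem_Iio] at hu hv
    have : (u : ZMod p) = v := by simpa [hd] using huv
    rw [ZMod.natCast_eq_natCast_iff'] at this
    rwa [Nat.mod_eq_of_lt (by omega), Nat.mod_eq_of_lt (by omega)] at this

theorem IsApSet.neg {p : ℕ} {d : ZMod p} {B : Finset (ZMod p)} (h : IsApSet p d B) :
    IsApSet p d (-B) := by
  obtain ⟨a, ha⟩ := h
  refine ⟨-a - ((B.card : ZMod p) - 1) * d, Finset.eq_of_subset_of_card_le ?_ (card_apSet_le _ _ _)⟩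
  intro x hx
  rw [Finset.mem_neg'] at hx
  rw [ha] at hx
  obtain ⟨i, hi, e⟩ := mem_apSet.1 hx
  refine mem_apSet.2 ⟨B.card - 1 - i, by rw [Finset.card_neg]; omega, ?_⟩
  have h2 : (B.card - 1 - i : ℕ) + (i + 1) = B.card := by omega
  have h3 : ((B.card - 1 - i : ℕ) : ZMod p) = (B.card : ZMod p) - (i + 1) := by
    rw [eq_sub_iff_add_eq]; exact_mod_cast congrArg (Nat.cast : ℕ → ZMod p) h2
  rw [h3, ← neg_eq_iff_eq_neg.2 e]
  ring

theorem isApSet_partner {p : ℕ} [Fact p.Prime] {d : ZMod p} (hd : d ≠ 0) {A B : Finset (ZMod p)}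
    (hA : IsApSet p d A) (hA2 : 2 ≤ A.card) (hB : B.Nonempty)
    (h : (A + B).card + 1 ≤ A.card + B.card) (hp : (A + B).card < p) : IsApSet p d B := by
  obtain ⟨a, ha⟩ := hA
  set n := A.card with hn
  set D := B ∪ B.image (· + d) with hD
  have hsub : apSet p a d (n-1) + D ⊆ A + B := by
    intro x hx
    obtain ⟨u, hu, v, hv, rfl⟩ := Finset.mem_add.1 hx
    obtain ⟨i, hi, rfl⟩ := mem_apSet.1 hu
    rcases Finset.mem_union.1 hv with hv | hv
    · exact Finset.add_mem_add (by rw [ha]; exact mem_apSet.2 ⟨i, by omega, rfl⟩) hv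
    · obtain ⟨w, hw, rfl⟩ := Finset.mem_image.1 hv
      refine Finset.mem_add.2 ⟨a + ((i+1 : ℕ) : ZMod p) * d, by rw [ha]; exact mem_apSet.2 ⟨i+1, by omega, rfl⟩, w, hw, ?_⟩
      push_cast; ring
  have hcard : n ≤ (apSet p a d (n-1)).card + 1 := by
    have : A ⊆ insert (a + ((n-1 : ℕ) : ZMod p) * d) (apSet p a d (n-1)) := by
      intro x hx
      rw [ha] at hx
      obtain ⟨i, hi, rfl⟩ := mem_apSet.1 hx
      rw [Finset.mem_insert]
      by_cases hin : i = n - 1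
      · left; rw [hin]
      · right; exact mem_apSet.2 ⟨i, by omega, rfl⟩
    exact (Finset.card_le_card this).trans (Finset.card_insert_le _ _)
  have h1 := cd_add (A := apSet p a d (n-1)) (B := D)
    ⟨a, mem_apSet.2 ⟨0, by omega, by simp⟩⟩ (hB.mono Finset.subset_union_left)
    (Finset.card_le_card hsub) hp
  have hDc : D.card ≤ B.card + 1 := by omega
  set S := B.filter (fun x => x - d ∉ B) with hS
  have hdisj : Disjoint (B.image (· + d)) S := by
    rw [Finset.disjoint_left]
    intro x hx hxS
    obtain ⟨w, hw, rfl⟩ := Finset.mem_image.1 hx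
    apply (Finset.mem_filter.1 hxS).2
    simpa using hw
  have h2 : (B.image (· + d)).card + S.card ≤ D.card := by
    rw [← Finset.card_union_of_disjoint hdisj]
    apply Finset.card_le_card
    apply Finset.union_subset Finset.subset_union_right
    exact (Finset.filter_subset _ _).trans Finset.subset_union_left
  rw [Finset.card_image_of_injective _ (add_left_injective d)] at h2
  have hS1 : S.card ≤ 1 := by omega
  rcases S.eq_empty_or_nonempty with hSe | ⟨b, hb⟩
  · apply isApSet_of_chain hd hB 0
    intro x hx _
    by_contra hc
    have : x ∈ S := Finset.mem_filter.2 ⟨hx, hc⟩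
    simp [hSe] at this
  · apply isApSet_of_chain hd hB b
    intro x hx hxb
    by_contra hc
    have : x ∈ S := Finset.mem_filter.2 ⟨hx, hc⟩
    exact hxb (Finset.card_le_one.1 hS1 _ this _ hb)

theorem isApSet_of_sum {p : ℕ} [Fact p.Prime] {d : ZMod p} (hd : d ≠ 0) {A B : Finset (ZMod p)}
    (hA2 : A.Nonempty) (hB : 2 ≤ B.card)
    (h : (A + B).card + 1 ≤ A.card + B.card) (hp : (A + B).card + 2 ≤ p)
    (hAB : IsApSet p d (A + B)) : IsApSet p d A := by
  obtain ⟨c, hc⟩ := hAB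
  set n := (A + B).card with hn
  set C := (A + B)ᶜ with hC
  have hCc : C.card = p - n := by rw [hC, Finset.card_compl, ZMod.card]
  have hCap : IsApSet p d C := by
    apply isApSet_of_chain hd (Finset.card_pos.1 (by omega)) (c + (n : ZMod p) * d)
    intro x hx hxb
    rw [hC, Finset.mem_compl] at hx ⊢
    intro hxd
    rw [hc] at hxd hx
    obtain ⟨i, hi, e⟩ := mem_apSet.1 hxd
    have e2 : c + ((i + 1 : ℕ) : ZMod p) * d = x := by
      push_cast; rw [← sub_add_cancel x d, ← e]; ring
    by_cases hin : i + 1 = n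
    · apply hxb; rw [← e2, hin]
    · exact hx (mem_apSet.2 ⟨i+1, by omega, e2⟩)
  have hsub : C + (-A) ⊆ Bᶜ := by
    intro x hx
    obtain ⟨u, hu, v, hv, rfl⟩ := Finset.mem_add.1 hx
    rw [Finset.mem_neg'] at hv
    rw [Finset.mem_compl]
    intro hb
    rw [hC, Finset.mem_compl] at hu
    apply hu
    exact Finset.mem_add.2 ⟨-v, hv, _, hb, by ring⟩
  have hle := Finset.card_le_card hsub
  rw [Finset.card_compl, ZMod.card] at hle
  have hBp : B.card ≤ p := by simpa [ZMod.card] using Finset.card_le_univ B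
  have := isApSet_partner hd hCap (by omega) (B := -A) (by simpa using hA2)
    (by rw [Finset.card_neg]; omega) (by omega)
  simpa using this.neg

theorem vosper_aux {p : ℕ} [Fact p.Prime] (n : ℕ) : ∀ (A B : Finset (ZMod p)), B.card = n →
    2 ≤ A.card → 2 ≤ B.card → (A + B).card + 1 ≤ A.card + B.card → (A + B).card + 2 ≤ p →
    ∃ d : ZMod p, d ≠ 0 ∧ IsApSet p d A := by
  induction n using Nat.strong_induction_on with
  | _ n ih =>
  intro A B hn hA hB h hp
  have hAne : A.Nonempty := Finset.card_pos.1 (by omega)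
  have hBne : B.Nonempty := Finset.card_pos.1 (by omega)
  by_cases hB2 : B.card = 2
  · obtain ⟨x, y, hxy, rfl⟩ := Finset.card_eq_two.1 hB2
    have hd : y - x ≠ 0 := sub_ne_zero.2 (Ne.symm hxy)
    refine ⟨y - x, hd, ?_⟩
    have : IsApSet p (y - x) {x, y} := by
      refine isApSet_of_chain hd hBne x ?_
      intro z hz hzx
      have : z = y := by simpa [hzx] using hz
      simp [this]
    exact isApSet_partner hd this hB hAne (by rw [add_comm _ A]; omega) (by rw [add_comm _ A]; omega)
  by_cases hex : ∃ e : ZMod p, 2 ≤ (B.filter (fun b => b + e ∈ A)).card ∧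
      (B.filter (fun b => b + e ∈ A)).card < B.card
  · obtain ⟨e, he2, hlt⟩ := hex
    set B' := B.filter (fun b => b + e ∈ A) with hB'
    set A' := A ∪ B.image (· + e) with hA'
    have hcard : A'.card + B'.card = A.card + B.card := by
      have h1 := Finset.card_union_add_card_inter A (B.image (· + e))
      have h2 : A ∩ B.image (· + e) = B'.image (· + e) := by
        ext x
        simp only [Finset.mem_inter, Finset.mem_image, hB', Finset.mem_filter]
        constructor
        · rintro ⟨hx, b, hb, rfl⟩; exact ⟨b, ⟨hb, hx⟩, rfl⟩
        · rintro ⟨b, ⟨hb, hx⟩, rfl⟩; exact ⟨hx, b, hb, rfl⟩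
      rw [h2, Finset.card_image_of_injective _ (add_left_injective e),
        Finset.card_image_of_injective _ (add_left_injective e)] at h1
      exact h1
    have hsub : A' + B' ⊆ A + B := by
      intro x hx
      obtain ⟨u, hu, v, hv, rfl⟩ := Finset.mem_add.1 hx
      obtain ⟨hv1, hv2⟩ := Finset.mem_filter.1 hv
      rcases Finset.mem_union.1 hu with hu | hu
      · exact Finset.add_mem_add hu hv1
      · obtain ⟨w, hw, rfl⟩ := Finset.mem_image.1 hu
        exact Finset.mem_add.2 ⟨_, hv2, w, hw, by ring⟩
    have hle := Finset.card_le_card hsub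
    have hAA : A.card ≤ A'.card := Finset.card_le_card Finset.subset_union_left
    have hA'ne : A'.Nonempty := Finset.card_pos.1 (by omega)
    have hB'ne : B'.Nonempty := Finset.card_pos.1 (by omega)
    obtain ⟨d, hd, hap⟩ := ih B'.card (by omega) A' B' rfl (by omega) he2 (by omega) (by omega)
    have hbp := isApSet_partner hd hap (by omega) hB'ne (by omega) (by omega)
    refine ⟨d, hd, isApSet_of_sum hd hAne hB h hp ?_⟩
    have hcd := cd_add hA'ne hB'ne le_rfl (by omega)
    have heq : A' + B' = A + B := Finset.eq_of_subset_of_card_le hsub (by omega)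
    obtain ⟨a, ha⟩ := hap
    obtain ⟨b, hb⟩ := hbp
    refine ⟨a + b, Finset.eq_of_subset_of_card_le ?_ (card_apSet_le _ _ _)⟩
    · rw [← heq]
      intro x hx
      obtain ⟨u, hu, v, hv, rfl⟩ := Finset.mem_add.1 hx
      rw [ha] at hu
      rw [hb] at hv
      obtain ⟨i, hi, rfl⟩ := mem_apSet.1 hu
      obtain ⟨j, hj, rfl⟩ := mem_apSet.1 hv
      refine mem_apSet.2 ⟨i + j, by omega, ?_⟩
      push_cast; ring
  · exfalso
    push Not at hex
    obtain ⟨b0, hb0⟩ := hBne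
    set X := A.filter (fun a => ∀ b ∈ B, b + (a - b0) ∈ A) with hX
    set Y := A.filter (fun a => ¬ ∀ b ∈ B, b + (a - b0) ∈ A) with hY
    have hXY : X.card + Y.card = A.card := Finset.card_filter_add_card_filter_not _
    have hYB : ∀ a ∈ Y, ∀ b ∈ B, b ≠ b0 → b + (a - b0) ∉ A := by
      intro a ha b hb hbb hc
      obtain ⟨ha1, ha2⟩ := Finset.mem_filter.1 ha
      have h1 := hex (a - b0) (by
        have : ({b, b0} : Finset (ZMod p)) ⊆ B.filter (fun b => b + (a - b0) ∈ A) := by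
          intro z hz
          simp only [Finset.mem_insert, Finset.mem_singleton] at hz
          rcases hz with rfl | rfl
          · exact Finset.mem_filter.2 ⟨hb, hc⟩
          · exact Finset.mem_filter.2 ⟨hb0, by simpa using ha1⟩
        have h2 := Finset.card_le_card this
        rwa [Finset.card_pair hbb] at h2)
      have h3 := Finset.eq_of_subset_of_card_le (Finset.filter_subset _ _) h1
      apply ha2
      intro z hz
      rw [← h3] at hz
      exact (Finset.mem_filter.1 hz).2
    have hY1 : Y.card ≤ 1 := by
      by_contra hc
      have hYne : Y.Nonempty := Finset.card_pos.1 (by omega)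
      have hEne : (B.erase b0).Nonempty := Finset.card_pos.1 (by
        rw [Finset.card_erase_of_mem hb0]; omega)
      have hdj : Disjoint (A.image (· + b0)) (Y + B.erase b0) := by
        rw [Finset.disjoint_left]
        intro x hx hx2
        obtain ⟨w, hw, rfl⟩ := Finset.mem_image.1 hx
        obtain ⟨u, hu, v, hv, e⟩ := Finset.mem_add.1 hx2
        obtain ⟨hv1, hv2⟩ := Finset.mem_erase.1 hv
        apply hYB u hu v hv2 hv1
        have : v + (u - b0) = w := by linear_combination e
        rwa [this]
      have hsub : A.image (· + b0) ∪ (Y + B.erase b0) ⊆ A + B := by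
        apply Finset.union_subset
        · intro x hx
          obtain ⟨w, hw, rfl⟩ := Finset.mem_image.1 hx
          exact Finset.add_mem_add hw hb0
        · exact Finset.add_subset_add (Finset.filter_subset _ _) (Finset.erase_subset _ _)
      have h1 := Finset.card_le_card hsub
      rw [Finset.card_union_of_disjoint hdj,
        Finset.card_image_of_injective _ (add_left_injective b0)] at h1
      have h2 := cd_add hYne hEne le_rfl (by omega)
      rw [Finset.card_erase_of_mem hb0] at h2
      omega
    have hXne : X.Nonempty := Finset.card_pos.1 (by omega)
    have hsub : X + B ⊆ A.image (· + b0) := by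
      intro x hx
      obtain ⟨u, hu, v, hv, rfl⟩ := Finset.mem_add.1 hx
      refine Finset.mem_image.2 ⟨v + (u - b0), (Finset.mem_filter.1 hu).2 v hv, by ring⟩
    have h1 := Finset.card_le_card hsub
    rw [Finset.card_image_of_injective _ (add_left_injective b0)] at h1
    have hAp : A.card ≤ (A + B).card := Finset.card_le_card_add_right ⟨b0, hb0⟩
    have h2 := cd_add hXne ⟨b0, hb0⟩ h1 (by omega)
    omega

theorem winding {k p : ℕ} [Fact p.Prime] (hp : p = 3 * k + 1) (hk : 1 ≤ k)
    (B : ZMod p → Finset (ZMod p)) (t : ZMod p) (c : ℤ)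
    (hB : ∀ i j, ∀ x ∈ B i, ∀ y ∈ B j, x + y ∉ B (i + j))
    (h0 : ∀ z : ℤ, k + 1 ≤ z → z ≤ 2 * k → (z : ZMod p) ∈ B 0)
    (h0' : ∀ x ∈ B 0, ∃ z : ℤ, k + 1 ≤ z ∧ z ≤ 2 * k ∧ (z : ZMod p) = x)
    (h1 : ∀ z : ℤ, c ≤ z → z ≤ c + k → (z : ZMod p) ∈ B t)
    (hne : ∀ i, (B i).Nonempty) :
    ∑ m ∈ Finset.range p, (B ((m : ZMod p) * t)).card ≤ k * p := by
  have hpp : p.Prime := Fact.out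
  have hpz : ((p : ℤ) : ZMod p) = 0 := by simp
  have inv : ∀ n : ℕ, ∃ a b : ℤ, a ≤ b ∧ b ≤ a + k ∧ (a : ZMod p) ∈ B ((n : ZMod p) * t) ∧
      (b : ZMod p) ∈ B ((n : ZMod p) * t) ∧
      (∀ x ∈ B ((n : ZMod p) * t), ∃ z : ℤ, a ≤ z ∧ z ≤ b ∧ (z : ZMod p) = x) ∧
      (k + 1 + ∑ m ∈ Finset.range n, (((B ((m : ZMod p) * t)).card : ℤ) + k + c) ≤ a) ∧
      (b ≤ 2 * k + ∑ m ∈ Finset.range n, (3 * k + 1 - ((B ((m : ZMod p) * t)).card : ℤ) + c)) := by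
    intro n
    induction n with
    | zero =>
      refine ⟨k + 1, 2 * k, by omega, by omega, ?_, ?_, ?_, by simp, by simp⟩
      · simpa using h0 (k+1) (by omega) (by omega)
      · simpa using h0 (2*k) (by omega) (by omega)
      · simpa using h0'
    | succ n ih =>
      obtain ⟨a, b, hab, hba, ha, hb, hsub, hlo, hhi⟩ := ih
      set f : ℤ := ((B ((n : ZMod p) * t)).card : ℤ) with hf
      have hfc : f ≤ b - a + 1 := by
        have : B ((n : ZMod p) * t) ⊆ (Finset.Icc a b).image (fun z : ℤ => (z : ZMod p)) := by
          intro x hx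
          obtain ⟨z, hz1, hz2, e⟩ := hsub x hx
          exact Finset.mem_image.2 ⟨z, Finset.mem_Icc.2 ⟨hz1, hz2⟩, e⟩
        have := (Finset.card_le_card this).trans Finset.card_image_le
        rw [Int.card_Icc] at this
        omega
      have hrow : ((n + 1 : ℕ) : ZMod p) * t = (n : ZMod p) * t + t := by push_cast; ring
      set R := B (((n + 1 : ℕ) : ZMod p) * t) with hR
      have havoid : ∀ z : ℤ, a + c ≤ z → z ≤ b + c + k → (z : ZMod p) ∉ R := by
        intro z hz1 hz2
        rw [hR, hrow]
        by_cases hz : z ≤ a + c + k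
        · have := hB _ _ _ ha _ (h1 (z - a) (by omega) (by omega))
          simpa using this
        · have := hB _ _ _ hb _ (h1 (z - b) (by omega) (by omega))
          simpa using this
      have hlift : ∀ x ∈ R, ∃ z : ℤ, b + c + k + 1 ≤ z ∧ z ≤ a + c + p - 1 ∧ (z : ZMod p) = x := by
        intro x hx
        set y : ℤ := (((x - ((a + c : ℤ) : ZMod p)).val : ℕ) : ℤ) with hy
        have hyp : y < p := by rw [hy]; exact_mod_cast ZMod.val_lt _
        have hy0 : 0 ≤ y := by positivity
        have hcast : ((a + c + y : ℤ) : ZMod p) = x := by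
          rw [Int.cast_add, hy, Int.cast_natCast, ZMod.natCast_val, ZMod.cast_id]; ring
        refine ⟨a + c + y, ?_, by omega, hcast⟩
        by_contra hlt
        exact havoid (a + c + y) (by omega) (by omega) (hcast ▸ hx)
      set F := (Finset.Icc (b + c + k + 1) (a + c + p - 1)).filter
        (fun z : ℤ => (z : ZMod p) ∈ R) with hF
      have hFne : F.Nonempty := by
        obtain ⟨x, hx⟩ := hne (((n + 1 : ℕ) : ZMod p) * t)
        obtain ⟨z, hz1, hz2, e⟩ := hlift x hx
        exact ⟨z, Finset.mem_filter.2 ⟨Finset.mem_Icc.2 ⟨hz1, hz2⟩, by rw [e]; exact hx⟩⟩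
      have hmin := Finset.min'_mem F hFne
      have hmax := Finset.max'_mem F hFne
      set a' := F.min' hFne with ha'
      set b' := F.max' hFne with hb'
      obtain ⟨hm1, hm2⟩ := Finset.mem_filter.1 hmin
      obtain ⟨hM1, hM2⟩ := Finset.mem_filter.1 hmax
      rw [Finset.mem_Icc] at hm1 hM1
      have hle : a' ≤ b' := Finset.min'_le _ _ hmax
      refine ⟨a', b', hle, ?_, hm2, hM2, ?_, ?_, ?_⟩
      · by_contra hc
        have h3 := hB 0 _ _ (h0 (b' - a') (by omega) (by omega)) _ hm2
        rw [zero_add] at h3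
        apply h3
        have : ((b' - a' : ℤ) : ZMod p) + (a' : ZMod p) = (b' : ZMod p) := by push_cast; ring
        rw [this]; exact hM2
      · intro x hx
        obtain ⟨z, hz1, hz2, e⟩ := hlift x hx
        have hzF : z ∈ F := Finset.mem_filter.2 ⟨Finset.mem_Icc.2 ⟨hz1, hz2⟩, by rw [e]; exact hx⟩
        exact ⟨z, Finset.min'_le _ _ hzF, Finset.le_max' _ _ hzF, e⟩
      · rw [Finset.sum_range_succ]; omega
      · rw [Finset.sum_range_succ]; omega
  obtain ⟨a, b, hab, hba, -, -, hsub, hlo, hhi⟩ := inv p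
  rw [CharP.cast_eq_zero, zero_mul] at hsub
  obtain ⟨z1, hz1, hz1', e1⟩ := hsub _ (h0 (k+1) (by omega) (by omega))
  obtain ⟨z2, hz2, hz2', e2⟩ := hsub _ (h0 (2*k) (by omega) (by omega))
  rw [ZMod.intCast_eq_intCast_iff_dvd_sub] at e1 e2
  obtain ⟨u, hu⟩ := e1
  obtain ⟨v, hv⟩ := e2
  have hpi : (p : ℤ) = 3 * k + 1 := by exact_mod_cast hp
  have huv : u = v := by
    have h5 : (p : ℤ) * (u - v) = (z2 - z1) - (k - 1) := by rw [mul_sub, ← hu, ← hv]; ring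
    have h6 : (p : ℤ) * (u - v) < p * 1 := by omega
    have h7 : (p : ℤ) * (-1) < p * (u - v) := by omega
    have hp0 : (0 : ℤ) < p := by omega
    have h8 := lt_of_mul_lt_mul_left h6 hp0.le
    have h9 := lt_of_mul_lt_mul_left h7 hp0.le
    omega
  subst huv
  have hs1 : ∑ m ∈ Finset.range p, (((B ((m : ZMod p) * t)).card : ℤ) + k + c) =
      (∑ m ∈ Finset.range p, ((B ((m : ZMod p) * t)).card : ℤ)) + p * (k + c) := by
    simp only [add_assoc, Finset.sum_add_distrib (g := fun _ => (k : ℤ) + c), Finset.sum_const,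
      Finset.card_range, nsmul_eq_mul]
  have hs2 : ∑ m ∈ Finset.range p, (3 * k + 1 - ((B ((m : ZMod p) * t)).card : ℤ) + c) =
      p * (p + c) - (∑ m ∈ Finset.range p, ((B ((m : ZMod p) * t)).card : ℤ)) := by
    rw [Finset.sum_add_distrib, Finset.sum_sub_distrib]
    simp only [Finset.sum_const, Finset.card_range, nsmul_eq_mul]
    rw [← hpi]; ring
  rw [hs1] at hlo
  rw [hs2] at hhi
  by_contra hcon
  push Not at hcon
  have hcon' : (k : ℤ) * p < ∑ m ∈ Finset.range p, ((B ((m : ZMod p) * t)).card : ℤ) := by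
    exact_mod_cast hcon
  set S := ∑ m ∈ Finset.range p, ((B ((m : ZMod p) * t)).card : ℤ)
  have hp0 : (0 : ℤ) < p := by omega
  have g1 : (p : ℤ) * (2 * k + c) < p * (-u) := by nlinarith
  have g2 : (p : ℤ) * (-u) < p * (2 * k + 1 + c) := by nlinarith
  have g3 := lt_of_mul_lt_mul_left g1 hp0.le
  have g4 := lt_of_mul_lt_mul_left g2 hp0.le
  omega

theorem sumfree_zmod {k p : ℕ} [Fact p.Prime] (hp : p = 3 * k + 1) (T : Finset (ZMod p))
    (hT : ∀ x ∈ T, ∀ y ∈ T, x + y ∉ T) : T.card ≤ k := by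
  rcases T.eq_empty_or_nonempty with rfl | hne
  · simp
  have hsub : T + T ⊆ Tᶜ := by
    intro x hx
    obtain ⟨u, hu, v, hv, rfl⟩ := Finset.mem_add.1 hx
    simpa using hT u hu v hv
  have h1 := Finset.card_le_card hsub
  rw [Finset.card_compl, ZMod.card] at h1
  have hTp : T.card ≤ p := by simpa [ZMod.card] using Finset.card_le_univ T
  have hpos := hne.card_pos
  have := cd_add hne hne h1 (by omega)
  omega

theorem triple {p : ℕ} [Fact p.Prime] {A B C : Finset (ZMod p)} (hA : A.Nonempty)
    (hB : B.Nonempty) (hC : C.Nonempty) (h : ∀ x ∈ A, ∀ y ∈ B, x + y ∉ C) :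
    A.card + B.card + C.card ≤ p + 1 := by
  have hsub : A + B ⊆ Cᶜ := by
    intro x hx
    obtain ⟨u, hu, v, hv, rfl⟩ := Finset.mem_add.1 hx
    simpa using h u hu v hv
  have h1 := Finset.card_le_card hsub
  rw [Finset.card_compl, ZMod.card] at h1
  have hTp : C.card ≤ p := by simpa [ZMod.card] using Finset.card_le_univ C
  have hpos := hC.card_pos
  have := cd_add hA hB h1 (by omega)
  omega

theorem plane {k p : ℕ} [Fact p.Prime] (hp : p = 3 * k + 1) (hk : 2 ≤ k)
    (B : ZMod p → Finset (ZMod p))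
    (hB : ∀ i j, ∀ x ∈ B i, ∀ y ∈ B j, x + y ∉ B (i + j))
    (hB0 : (B 0).card = k) : ∑ i, (B i).card ≤ k * p := by
  have hB0ne : (B 0).Nonempty := Finset.card_pos.1 (by omega)
  have hle : ∀ i, (B i).card ≤ k + 1 := by
    intro i
    rcases (B i).eq_empty_or_nonempty with h | h
    · simp [h]
    · have := triple hB0ne h h (fun x hx y hy => by simpa using hB 0 i x hx y hy)
      omega
  set T := Finset.univ.filter (fun i => (B i).card = k + 1) with hT
  have hTk : T.card ≤ k := by
    apply sumfree_zmod hp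
    intro x hx y hy hxy
    simp only [hT, Finset.mem_filter, Finset.mem_univ, true_and] at hx hy hxy
    have := triple (A := B x) (B := B y) (C := B (x+y)) (Finset.card_pos.1 (by omega))
      (Finset.card_pos.1 (by omega)) (Finset.card_pos.1 (by omega)) (hB x y)
    omega
  by_cases hemp : ∃ j, (B j).card = 0
  · obtain ⟨j, hj⟩ := hemp
    have h1 : ∀ i ∈ Finset.univ.erase j, (B i).card ≤ k + if (B i).card = k + 1 then 1 else 0 := by
      intro i _
      have := hle i
      split_ifs <;> omega
    rw [← Finset.add_sum_erase _ _ (Finset.mem_univ j), hj, zero_add]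
    refine (Finset.sum_le_sum h1).trans ?_
    rw [Finset.sum_add_distrib, Finset.sum_const, Finset.card_erase_of_mem (Finset.mem_univ j),
      Finset.card_univ, ZMod.card, smul_eq_mul]
    have h2 : ∑ i ∈ Finset.univ.erase j, (if (B i).card = k + 1 then 1 else 0) ≤ T.card := by
      rw [← Finset.card_filter]
      exact Finset.card_le_card (Finset.filter_subset_filter _ (Finset.subset_univ _))
    have h3 : (p - 1) * k + k = k * p := by
      rw [hp]; simp; ring
    omega
  push Not at hemp
  have hne : ∀ i, (B i).Nonempty := fun i => Finset.card_pos.1 (Nat.pos_of_ne_zero (hemp i))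
  rcases T.eq_empty_or_nonempty with hTe | ⟨t, ht⟩
  · have : ∀ i ∈ (Finset.univ : Finset (ZMod p)), (B i).card ≤ k := by
      intro i _
      have h1 : i ∉ T := by simp [hTe]
      simp only [hT, Finset.mem_filter, Finset.mem_univ, true_and] at h1
      have := hle i
      omega
    have := Finset.sum_le_card_nsmul _ _ _ this
    rw [Finset.card_univ, ZMod.card, smul_eq_mul, mul_comm] at this
    exact this
  have htc : (B t).card = k + 1 := by simpa [hT] using ht
  have ht0 : t ≠ 0 := by rintro rfl; omega
  have hsub : B 0 + B t ⊆ (B t)ᶜ := by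
    intro x hx
    obtain ⟨u, hu, v, hv, rfl⟩ := Finset.mem_add.1 hx
    simpa using hB 0 t u hu v hv
  have hc := Finset.card_le_card hsub
  rw [Finset.card_compl, ZMod.card, htc] at hc
  obtain ⟨d, hd, hap⟩ := vosper_aux _ (B 0) (B t) rfl (by omega) (by omega) (by omega) (by omega)
  have hbp := isApSet_partner hd hap (by omega) (hne t) (by omega) (by omega)
  obtain ⟨a, ha⟩ := hap
  obtain ⟨c', hc'⟩ := hbp
  rw [hB0] at ha
  rw [htc] at hc'
  set α := (a / d).val with hα
  set c := (c' / d).val with hcd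
  have hαd : (α : ZMod p) * d = a := by
    rw [hα, ZMod.natCast_val, ZMod.cast_id]; field_simp
  have hcd' : (c : ZMod p) * d = c' := by
    rw [hcd, ZMod.natCast_val, ZMod.cast_id]; field_simp
  have hαp : α < p := ZMod.val_lt _
  set B' : ZMod p → Finset (ZMod p) := fun i => Finset.univ.filter (fun x => x * d ∈ B i) with hB'
  have memB' : ∀ i x, x ∈ B' i ↔ x * d ∈ B i := by intro i x; simp [hB']
  have cardB' : ∀ i, (B' i).card = (B i).card := by
    intro i
    apply Finset.card_bij (fun x _ => x * d)
    · intro x hx; exact (memB' i x).1 hx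
    · intro x _ y _ e; exact mul_right_cancel₀ hd e
    · intro y hy
      refine ⟨y / d, (memB' i _).2 ?_, ?_⟩ <;> field_simp <;> exact hy
  have hB2 : ∀ i j, ∀ x ∈ B' i, ∀ y ∈ B' j, x + y ∉ B' (i + j) := by
    intro i j x hx y hy
    rw [memB'] at hx hy ⊢
    rw [add_mul]; exact hB i j _ hx _ hy
  have h0a : ∀ z : ℤ, α ≤ z → z ≤ α + k - 1 → (z : ZMod p) ∈ B' 0 := by
    intro z hz1 hz2
    rw [memB', ha, mem_apSet]
    refine ⟨(z - α).toNat, by omega, ?_⟩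
    have : (((z - α).toNat : ℤ) : ZMod p) = ((z - α : ℤ) : ZMod p) := by
      rw [Int.toNat_of_nonneg (by omega)]
    rw [Int.cast_natCast] at this
    rw [this, ← hαd]; push_cast; ring
  have h1a : ∀ z : ℤ, c ≤ z → z ≤ c + k → (z : ZMod p) ∈ B' t := by
    intro z hz1 hz2
    rw [memB', hc', mem_apSet]
    refine ⟨(z - c).toNat, by omega, ?_⟩
    have : (((z - c).toNat : ℤ) : ZMod p) = ((z - c : ℤ) : ZMod p) := by
      rw [Int.toNat_of_nonneg (by omega)]
    rw [Int.cast_natCast] at this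
    rw [this, ← hcd']; push_cast; ring
  have hno : ∀ z : ℤ, α ≤ z → z ≤ α + k - 1 → ∀ w : ℤ, -k ≤ w → w ≤ k → (z : ZMod p) ≠ w := by
    intro z hz1 hz2 w hw1 hw2 e
    by_cases hw : 0 ≤ w
    · have := hB2 0 t _ (h0a z hz1 hz2) _ (h1a c (by omega) (by omega))
      rw [e, zero_add] at this
      apply this
      have h5 := h1a (w + c) (by omega) (by omega)
      push_cast at h5 ⊢
      exact h5
    · have := hB2 0 t _ (h0a z hz1 hz2) _ (h1a (c - w) (by omega) (by omega))
      rw [e, zero_add] at this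
      apply this
      have h5 := h1a c (by omega) (by omega)
      push_cast at h5 ⊢
      simpa using h5
  have hα1 : α = k + 1 := by
    have q1 : ¬ (α ≤ k) := fun h => hno α (by omega) (by omega) α (by omega) (by omega) rfl
    have q2 : ¬ (2 * k + 1 ≤ α) := fun h =>
      hno α (by omega) (by omega) (α - p) (by omega) (by omega) (by simp)
    have q3 : ¬ (k + 2 ≤ α) := fun h =>
      hno (α + k - 1) (by omega) (by omega) (α + k - 1 - p) (by omega) (by omega) (by simp)
    omega
  have h0b : ∀ x ∈ B' 0, ∃ z : ℤ, k + 1 ≤ z ∧ z ≤ 2 * k ∧ (z : ZMod p) = x := by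
    intro x hx
    rw [memB', ha, mem_apSet] at hx
    obtain ⟨i, hi, e⟩ := hx
    refine ⟨k + 1 + i, by omega, by omega, ?_⟩
    rw [← hαd, hα1, ← add_mul] at e
    have := mul_right_cancel₀ hd e
    rw [← this]; push_cast; ring
  have hw := winding hp (by omega) B' t c hB2 (fun z h1 h2 => h0a z (by omega) (by omega)) h0b h1a
    (fun i => Finset.card_pos.1 (by rw [cardB']; exact (hne i).card_pos))
  simp only [cardB'] at hw
  refine le_trans (le_of_eq ?_) hw
  rw [← Equiv.sum_comp (Equiv.mulRight₀ t ht0) (fun i => (B i).card)]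
  apply Finset.sum_nbij' (fun x : ZMod p => x.val) (fun m : ℕ => (m : ZMod p))
  · intro x _; simpa using ZMod.val_lt x
  · intro m _; simp
  · intro x _; simp
  · intro m hm; exact ZMod.val_cast_of_lt (by simpa using hm)
  · intro x _; simp

theorem shift_count {p s : ℕ} [Fact p.Prime] (A : Finset (Fin s → ZMod p)) (i : ZMod p)
    (hi : i ≠ 0) (u : Fin s → ZMod p) :
    (Finset.univ.filter (fun w : Fin s → ZMod p => i • w + u ∈ A)).card = A.card := by
  apply Finset.card_bij (fun w _ => i • w + u)
  · intro w hw; simpa using hw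
  · intro w _ w' _ e
    exact smul_right_injective _ hi (add_right_cancel e)
  · intro y hy
    have : i • (i⁻¹ • (y - u)) + u = y := by rw [smul_inv_smul₀ hi]; simp
    exact ⟨i⁻¹ • (y - u), by simp only [Finset.mem_filter, Finset.mem_univ, true_and]; rw [this]; exact hy, this⟩

theorem upper {k p s : ℕ} [Fact p.Prime] (hp : p = 3 * k + 1) (hk : 2 ≤ k) (hs : 1 ≤ s)
    (A : Finset (Fin s → ZMod p)) (hA : ∀ a₁ ∈ A, ∀ a₂ ∈ A, a₁ + a₂ ∉ A) :
    A.card ≤ k * p ^ (s - 1) := by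
  have hps : p ^ s = p * p ^ (s - 1) := by
    rw [← pow_succ']; congr 1; omega
  have hG : Fintype.card (Fin s → ZMod p) = p ^ s := by simp [ZMod.card]
  have herase : (Finset.univ.erase (0 : ZMod p)).card = 3 * k := by
    rw [Finset.card_erase_of_mem (Finset.mem_univ _), Finset.card_univ, ZMod.card]; omega
  set L : (Fin s → ZMod p) → Finset (ZMod p) :=
    fun w => Finset.univ.filter (fun i => i • w ∈ A) with hL
  have memL : ∀ w i, i ∈ L w ↔ i • w ∈ A := by intro w i; simp [hL]
  have hLk : ∀ w, (L w).card ≤ k := by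
    intro w
    apply sumfree_zmod hp
    intro x hx y hy
    rw [memL] at *
    rw [add_smul]; exact hA _ hx _ hy
  by_cases hex : ∃ v, (L v).card = k
  · obtain ⟨v, hv⟩ := hex
    set R : (Fin s → ZMod p) → ZMod p → Finset (ZMod p) :=
      fun w i => Finset.univ.filter (fun x => i • w + x • v ∈ A) with hR
    have memR : ∀ w i x, x ∈ R w i ↔ i • w + x • v ∈ A := by intro w i x; simp [hR]
    have hR0 : ∀ w, (R w 0).card = k := by
      intro w
      rw [← hv]; congr 1
      ext x; rw [memR, memL]; simp
    have hpl : ∀ w, ∑ i ∈ Finset.univ.erase 0, (R w i).card ≤ k * (3 * k) := by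
      intro w
      have := plane hp hk (R w) (by
        intro i j x hx y hy
        rw [memR] at *
        have h1 := hA _ hx _ hy
        rwa [show (i + j) • w + (x + y) • v = i • w + x • v + (j • w + y • v) by
          rw [add_smul, add_smul]; abel]) (hR0 w)
      rw [← Finset.add_sum_erase _ _ (Finset.mem_univ (0 : ZMod p)), hR0 w] at this
      have h2 : k * p = k + k * (3 * k) := by rw [hp]; ring
      omega
    have hsum := Finset.sum_le_card_nsmul Finset.univ _ _ (fun w _ => hpl w)
    rw [Finset.sum_comm, Finset.card_univ, hG, smul_eq_mul] at hsum
    have hin : ∀ i ∈ Finset.univ.erase (0 : ZMod p), ∑ w, (R w i).card = p * A.card := by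
      intro i hi
      have hi0 := (Finset.mem_erase.1 hi).1
      simp only [hR, Finset.card_filter]
      rw [Finset.sum_comm]
      simp only [← Finset.card_filter]
      rw [Finset.sum_congr rfl (fun x _ => shift_count A i hi0 (x • v))]
      simp [ZMod.card]
    rw [Finset.sum_congr rfl hin, Finset.sum_const, herase, smul_eq_mul, hps] at hsum
    have hpos : 0 < 3 * k * p := by
      have : 0 < p := by omega
      positivity
    refine Nat.le_of_mul_le_mul_left (c := 3 * k * p) ?_ hpos
    calc 3 * k * p * A.card = 3 * k * (p * A.card) := by ring
      _ ≤ _ := hsum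
      _ = _ := by ring
  · push Not at hex
    have h1 : ∀ w, ∑ i ∈ Finset.univ.erase (0 : ZMod p), (if i • w ∈ A then 1 else 0) ≤ k - 1 := by
      intro w
      rw [← Finset.card_filter]
      have h2 := Finset.card_le_card (Finset.filter_subset_filter (fun i : ZMod p => i • w ∈ A)
        (Finset.subset_univ (Finset.univ.erase (0 : ZMod p))))
      have h3 := hLk w
      have h4 := hex w
      simp only [hL] at h3 h4
      omega
    have hsum := Finset.sum_le_card_nsmul Finset.univ _ _ (fun w _ => h1 w)
    rw [Finset.sum_comm, Finset.card_univ, hG, smul_eq_mul] at hsum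
    have hin : ∀ i ∈ Finset.univ.erase (0 : ZMod p),
        ∑ w : Fin s → ZMod p, (if i • w ∈ A then 1 else 0) = A.card := by
      intro i hi
      rw [← Finset.card_filter]
      simpa using shift_count A i (Finset.mem_erase.1 hi).1 0
    rw [Finset.sum_congr rfl hin, Finset.sum_const, herase, smul_eq_mul, hps] at hsum
    refine Nat.le_of_mul_le_mul_left (c := 3 * k) ?_ (by omega)
    refine hsum.trans ?_
    have : p * (k - 1) ≤ 3 * k * k := by
      obtain ⟨j, rfl⟩ : ∃ j, k = j + 1 := ⟨k - 1, by omega⟩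
      rw [hp]; simp only [Nat.add_sub_cancel]; nlinarith
    calc p * p ^ (s-1) * (k-1) = p * (k-1) * p ^ (s-1) := by ring
      _ ≤ 3 * k * k * p ^ (s-1) := Nat.mul_le_mul_right _ this
      _ = _ := by ring

theorem stmt_13 (k p s : ℕ) (hk : 1 ≤ k) (hp : p = 3 * k + 1) (hpp : p.Prime)
    (hs : 1 ≤ s) [NeZero p] :
    IsGreatest {m : ℕ | ∃ A : Finset (Fin s → ZMod p),
        (∀ a₁ ∈ A, ∀ a₂ ∈ A, ∀ a₃ ∈ A, a₁ + a₂ ≠ a₃) ∧ A.card = m}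
      (k * p ^ (s - 1)) := by
  haveI : Fact p.Prime := ⟨hpp⟩
  have hk2 : 2 ≤ k := by
    by_contra h
    have : k = 1 := by omega
    subst this
    rw [hp] at hpp
    norm_num at hpp
  constructor
  · obtain ⟨s, rfl⟩ : ∃ r, s = r + 1 := ⟨s - 1, by omega⟩
    set M : Finset (ZMod p) := (Finset.Icc (k+1) (2*k)).image (fun n : ℕ => (n : ZMod p)) with hM
    have hMc : M.card = k := by
      rw [hM, Finset.card_image_of_injOn]
      · simp; omega
      · intro u hu v hv e
        simp only [Finset.coe_Icc, Set.mem_Icc] at hu hv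
        have : (u : ZMod p) = v := e
        rw [ZMod.natCast_eq_natCast_iff'] at this
        rwa [Nat.mod_eq_of_lt (by omega), Nat.mod_eq_of_lt (by omega)] at this
    refine ⟨Fintype.piFinset (fun i => if i = 0 then M else Finset.univ), ?_, ?_⟩
    · intro a ha b hb c hc e
      have ha := Fintype.mem_piFinset.1 ha 0
      have hb := Fintype.mem_piFinset.1 hb 0
      have hc := Fintype.mem_piFinset.1 hc 0
      have e := congrFun e 0
      simp only [if_true, hM, Finset.mem_image, Finset.mem_Icc, Pi.add_apply] at ha hb hc e
      obtain ⟨x, hx, hx'⟩ := ha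
      obtain ⟨y, hy, hy'⟩ := hb
      obtain ⟨z, hz, hz'⟩ := hc
      rw [← hx', ← hy', ← hz'] at e
      have e2 : ((x + y : ℕ) : ZMod p) = (z : ZMod p) := by push_cast; exact e
      rw [ZMod.natCast_eq_natCast_iff', Nat.mod_eq_of_lt (a := z) (by omega)] at e2
      by_cases hlt : x + y < p
      · rw [Nat.mod_eq_of_lt hlt] at e2; omega
      · rw [Nat.mod_eq_sub_mod (by omega), Nat.mod_eq_of_lt (by omega)] at e2; omega
    · rw [Fintype.card_piFinset, Fin.prod_univ_succ]
      simp [hMc, ZMod.card, Fin.succ_ne_zero]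
  · rintro m ⟨A, hA, rfl⟩
    exact upper hp hk2 hs A (fun a ha b hb hab => hA a ha b hb _ hab rfl)
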